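/- Let I ⊆ ℝ be a nondegenerate interval, n ∈ ℕ, and let ω be an n-dimensional positive Chebyshev system over I. A function f : I → ℝ is ω-Jensen convex on I if and only if, for every p ∈ I, there exists a neighborhood U of p such that f is ω-Jensen convex on U ∩ I; that is, ω-Jensen convexity is a localizable property. -/

import Mathlib

/-- `Phi ω x` is the determinant `det(ωᵢ(xⱼ))` of an `n`-tuple of functions
evaluated at an `n`-tuple of points. -/
noncomputable def Phi {n : ℕ} (ω : Fin n → ℝ → ℝ) (x : Fin n → ℝ) : ℝ :=
  (Matrix.of fun i j => ω i (x j)).det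

/-- `ω` is an `n`-dimensional positive Chebyshev system over `H`:
`Phi ω` is positive on all strictly increasing `n`-tuples of elements of `H`. -/
def IsPosChebyshev {n : ℕ} (ω : Fin n → ℝ → ℝ) (H : Set ℝ) : Prop :=
  ∀ x : Fin n → ℝ, StrictMono x → (∀ j, x j ∈ H) → 0 < Phi ω x

/-- The partial sum `t₁ + ⋯ + tⱼ` (empty for `j = 0`, everything for `j = n`). -/
noncomputable def psum {n : ℕ} (t : Fin n → ℝ) (j : Fin (n + 1)) : ℝ :=
  ∑ i ∈ Finset.univ.filter (fun i : Fin n => (i : ℕ) < (j : ℕ)), t i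

/-- `f` is `(t,ω)`-convex on `J`:
`Φ_{(ω,f)}(x, x+t₁h, x+(t₁+t₂)h, …, x+(t₁+⋯+tₙ)h) ≥ 0`
for all `x ∈ J` and `h > 0` with `x+(t₁+⋯+tₙ)h ∈ J`. -/
def TOmegaConvexOn {n : ℕ} (ω : Fin n → ℝ → ℝ) (t : Fin n → ℝ) (J : Set ℝ) (f : ℝ → ℝ) : Prop :=
  ∀ x ∈ J, ∀ h : ℝ, 0 < h → x + psum t (Fin.last n) * h ∈ J →
    0 ≤ Phi (Fin.snoc ω f) (fun j => x + psum t j * h)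

/-!
The heart of the matter is a positivity statement for the determinants `Φ_{(ω,f)}` along a sequence
of points. If `z₀ < ⋯ < zₙ₊₁`, then subtracting from `f` the element of the span of `ω`
interpolating it at the inner points `z₁, …, zₙ` changes no `Φ_{(ω,f)}` and leaves a function
vanishing at these points. Hence omitting an inner point `zₖ` yields a determinant which is a
combination, with positive coefficients, of the ones obtained by omitting `z₀` and by omitting
`zₙ₊₁`. Both of these span fewer terms of the sequence, so by induction nonnegativity on
consecutive points propagates to all increasing tuples of the sequence.

Along an arithmetic progression, this says that Jensen convexity with step `d` implies it with step
`N * d`. On a compact segment local Jensen convexity gives convexity with every small step, and each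
step is a multiple of arbitrarily small ones.
-/

open Filter Topology

section Alternant

variable {R α : Type*} {n : ℕ}

/-- The alternant determinant `det (ωᵢ(xⱼ))` with values in a commutative ring; `Phi` is the case
of real functions of a real variable. -/
def alternant [CommRing R] (ω : Fin n → α → R) (x : Fin n → α) : R :=
  (Matrix.of fun i j => ω i (x j)).det

section CommRing

variable [CommRing R]

lemma alternant_snoc (ω : Fin n → α → R) (f : α → R) (x : Fin (n + 1) → α) :
    alternant (Fin.snoc ω f) x =
      ∑ j : Fin (n + 1), (-1) ^ (n + (j : ℕ)) * f (x j) * alternant ω (x ∘ j.succAbove) := by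
  rw [alternant, Matrix.det_succ_row _ (Fin.last n)]
  refine Finset.sum_congr rfl fun j _ => ?_
  have minor_eq : (Matrix.of fun i j => (Fin.snoc ω f : Fin (n + 1) → α → R) i (x j)).submatrix
      Fin.castSucc j.succAbove = Matrix.of fun i k => ω i (x (j.succAbove k)) := by
    ext i k
    simp
  simp [minor_eq, alternant]

lemma alternant_snoc_add_sum_smul (ω : Fin n → α → R) (f : α → R) (c : Fin n → R)
    (x : Fin (n + 1) → α) :
    alternant (Fin.snoc ω (f + ∑ i, c i • ω i)) x = alternant (Fin.snoc ω f) x := by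
  have row_operation := Matrix.det_updateRow_sum
    (Matrix.of fun i j => (Fin.snoc ω f : Fin (n + 1) → α → R) i (x j)) (Fin.last n)
    (Fin.snoc c 1)
  rw [Fin.snoc_last, one_smul] at row_operation
  rw [alternant, alternant, ← row_operation]
  congr 1
  ext i j
  induction i using Fin.lastCases with
  | last => simp [Fin.sum_univ_castSucc, add_comm]
  | cast i => simp

lemma exists_add_sum_smul_apply_eq_zero {ω : Fin n → α → R} {y : Fin n → α}
    (hy : IsUnit (alternant ω y)) (f : α → R) :
    ∃ c : Fin n → R, ∀ j, (f + ∑ i, c i • ω i) (y j) = 0 := by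
  obtain ⟨c, hc⟩ := Matrix.vecMul_surjective_iff_isUnit.2
    ((Matrix.isUnit_iff_isUnit_det _).2 hy) (-(f ∘ y))
  refine ⟨c, fun j => ?_⟩
  have interpolation : ∑ i, c i * ω i (y j) = -f (y j) := congrFun hc j
  simp [interpolation]

lemma alternant_snoc_of_interior_eq_zero (ω : Fin (n + 1) → α → R) {f : α → R}
    {x : Fin (n + 2) → α} (hf : ∀ i : Fin n, f (x i.castSucc.succ) = 0) :
    alternant (Fin.snoc ω f) x =
      f (x (Fin.last (n + 1))) * alternant ω (x ∘ Fin.castSucc) +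
        (-1) ^ (n + 1) * f (x 0) * alternant ω (x ∘ Fin.succ) := by
  rw [alternant_snoc, Fin.sum_univ_succ, Fin.sum_univ_castSucc]
  have sign : (-1 : R) ^ (n + 1 + (n + 1)) = 1 := Even.neg_one_pow ⟨_, rfl⟩
  simp [hf, sign, add_comm]

lemma alternant_snoc_comp_succAbove_mul (ω : Fin (n + 1) → α → R) (f : α → R)
    (z : Fin (n + 3) → α) (hz : IsUnit (alternant ω (z ∘ Fin.succ ∘ Fin.castSucc)))
    (k : Fin (n + 1)) :
    alternant (Fin.snoc ω f) (z ∘ k.castSucc.succ.succAbove) *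
        alternant ω (z ∘ Fin.succ ∘ Fin.castSucc) =
      alternant (Fin.snoc ω f) (z ∘ Fin.succ) *
          alternant ω (z ∘ k.castSucc.succ.succAbove ∘ Fin.castSucc) +
        alternant (Fin.snoc ω f) (z ∘ Fin.castSucc) *
          alternant ω (z ∘ k.castSucc.succ.succAbove ∘ Fin.succ) := by
  obtain ⟨c, hc⟩ := exists_add_sum_smul_apply_eq_zero hz f
  simp only [← alternant_snoc_add_sum_smul ω f c]
  set g := f + ∑ i, c i • ω i
  have omit_first : alternant (Fin.snoc ω g) (z ∘ Fin.succ) =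
      g (z (Fin.last (n + 2))) * alternant ω (z ∘ Fin.succ ∘ Fin.castSucc) := by
    rw [alternant_snoc_of_interior_eq_zero ω fun i => hc i.succ]
    have h_first : g (z 1) = 0 := hc 0
    simp [h_first, Function.comp_assoc]
  have omit_last : alternant (Fin.snoc ω g) (z ∘ Fin.castSucc) =
      (-1) ^ (n + 1) * g (z 0) * alternant ω (z ∘ Fin.succ ∘ Fin.castSucc) := by
    rw [alternant_snoc_of_interior_eq_zero ω fun i => hc i.castSucc]
    have h_last : g (z (Fin.last (n + 1)).castSucc) = 0 := hc (Fin.last n)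
    have h_comm : (Fin.castSucc ∘ Fin.succ : Fin (n + 1) → Fin (n + 3)) =
      Fin.succ ∘ Fin.castSucc := rfl
    simp [h_last, h_comm, Function.comp_assoc]
  have omit_inner : alternant (Fin.snoc ω g) (z ∘ k.castSucc.succ.succAbove) =
      g (z (Fin.last (n + 2))) * alternant ω (z ∘ k.castSucc.succ.succAbove ∘ Fin.castSucc) +
        (-1) ^ (n + 1) * g (z 0) * alternant ω (z ∘ k.castSucc.succ.succAbove ∘ Fin.succ) := by
    rw [alternant_snoc_of_interior_eq_zero ω fun i => ?_]
    · simp [Function.comp_assoc]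
    · simpa using hc (k.succAbove i)
  rw [omit_first, omit_last, omit_inner]
  ring

end CommRing

section LinearOrderedField

variable [Field R] [LinearOrder R] [IsStrictOrderedRing R] {ω : Fin n → α → R} {f : α → R}

lemma alternant_snoc_comp_succAbove_nonneg {z : Fin (n + 2) → α}
    (hω : ∀ e : Fin n → Fin (n + 2), StrictMono e → 0 < alternant ω (z ∘ e))
    (h_succ : 0 ≤ alternant (Fin.snoc ω f) (z ∘ Fin.succ))
    (h_castSucc : 0 ≤ alternant (Fin.snoc ω f) (z ∘ Fin.castSucc)) (k : Fin n) :
    0 ≤ alternant (Fin.snoc ω f) (z ∘ k.castSucc.succ.succAbove) := by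
  cases n with
  | zero => exact k.elim0
  | succ n =>
    have h_inner := hω _ (Fin.strictMono_succ.comp Fin.strictMono_castSucc)
    have hk := Fin.strictMono_succAbove k.castSucc.succ
    refine nonneg_of_mul_nonneg_left ?_ h_inner
    rw [alternant_snoc_comp_succAbove_mul ω f z h_inner.ne'.isUnit k]
    exact add_nonneg (mul_nonneg h_succ (hω _ (hk.comp Fin.strictMono_castSucc)).le)
      (mul_nonneg h_castSucc (hω _ (hk.comp Fin.strictMono_succ)).le)

lemma apply_eq_apply_zero_add_val {M : Type*} [AddMonoidWithOne M] {e : Fin (n + 1) → M}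
    (he : ∀ k : Fin n, e k.succ = e k.castSucc + 1) (i : Fin (n + 1)) :
    e i = e 0 + (i : ℕ) := by
  induction i using Fin.induction with
  | zero => simp
  | succ i ih => rw [he, ih, Fin.val_castSucc, Fin.val_succ, Nat.cast_succ, add_assoc]

lemma alternant_snoc_comp_nonneg_of_consecutive {y : ℕ → α} {J : Set ℕ} (hJ : J.OrdConnected)
    (hω : ∀ e : Fin n → ℕ, StrictMono e → (∀ i, e i ∈ J) → 0 < alternant ω (y ∘ e))
    (h_consec : ∀ m ∈ J, m + n ∈ J →
      0 ≤ alternant (Fin.snoc ω f) fun i : Fin (n + 1) => y (m + i))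
    {e : Fin (n + 1) → ℕ} (he : StrictMono e) (h_zero : e 0 ∈ J) (h_last : e (Fin.last n) ∈ J) :
    0 ≤ alternant (Fin.snoc ω f) (y ∘ e) := by
  induction h_span : e (Fin.last n) - e 0 using Nat.strong_induction_on generalizing e with
  | _ s ih =>
  by_cases h_gap : ∀ k : Fin n, e k.succ = e k.castSucc + 1
  · have he_eq := apply_eq_apply_zero_add_val h_gap
    have h_end : e (Fin.last n) = e 0 + n := by simpa using he_eq (Fin.last n)
    convert h_consec (e 0) h_zero (h_end ▸ h_last) using 2
    ext i
    rw [Function.comp_apply, he_eq i, Nat.cast_id]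
  · obtain ⟨k, hk⟩ := not_forall.1 h_gap
    have hk_lt : e k.castSucc < e k.succ := he Fin.castSucc_lt_succ
    set E : Fin (n + 2) → ℕ := Fin.insertNth k.castSucc.succ (e k.castSucc + 1) e
    have hE : StrictMono E := Fin.strictMono_insertNth he k _ (by omega) (by omega)
    have hE_omit : E ∘ k.castSucc.succ.succAbove = e := by
      ext i
      simp [E]
    have hE_zero : E 0 = e 0 := by simpa using congrFun hE_omit 0
    have hE_last : E (Fin.last (n + 1)) = e (Fin.last n) := by
      simpa using congrFun hE_omit (Fin.last n)
    have hE_mem (i) : E i ∈ J := hJ.out h_zero h_last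
      ⟨hE_zero ▸ hE.monotone (Fin.zero_le i), hE_last ▸ hE.monotone (Fin.le_last i)⟩
    have h_span_succ : E (Fin.last (n + 1)) - E 1 < s := by
      have h_lt : E 0 < E 1 := hE Fin.zero_lt_one
      have h_le : E 1 ≤ E (Fin.last (n + 1)) := hE.monotone (Fin.le_last 1)
      omega
    have h_span_castSucc : E (Fin.last n).castSucc - E 0 < s := by
      have h_lt : E (Fin.last n).castSucc < E (Fin.last (n + 1)) := hE (Fin.castSucc_lt_last _)
      have h_le : E 0 ≤ E (Fin.last n).castSucc := hE.monotone (Fin.zero_le _)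
      omega
    rw [← hE_omit]
    exact alternant_snoc_comp_succAbove_nonneg (z := y ∘ E)
      (fun _ he' => hω _ (hE.comp he') fun _ => hE_mem _)
      (ih _ h_span_succ (hE.comp Fin.strictMono_succ) (hE_mem _) (hE_mem _) rfl)
      (ih _ h_span_castSucc (hE.comp Fin.strictMono_castSucc) (hE_mem _) (hE_mem _) rfl) k

end LinearOrderedField

end Alternant

/-- The inequality defining `(t, ω)`-convexity of `f` on `J`, required for a single value `h` of
the step. -/
def TOmegaConvexOnWithStep {n : ℕ} (ω : Fin n → ℝ → ℝ) (t : Fin n → ℝ) (J : Set ℝ) (f : ℝ → ℝ)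
    (h : ℝ) : Prop :=
  ∀ x ∈ J, x + psum t (Fin.last n) * h ∈ J →
    0 ≤ Phi (Fin.snoc ω f) (fun j => x + psum t j * h)

section Convexity

variable {n : ℕ} {ω : Fin n → ℝ → ℝ} {t : Fin n → ℝ} {J K : Set ℝ} {f : ℝ → ℝ}

lemma IsPosChebyshev.mono (hω : IsPosChebyshev ω K) (hJK : J ⊆ K) : IsPosChebyshev ω J :=
  fun x hx hxJ => hω x hx fun j => hJK (hxJ j)

lemma TOmegaConvexOn.mono (hf : TOmegaConvexOn ω t K f) (hJK : J ⊆ K) : TOmegaConvexOn ω t J f :=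
  fun x hx h hh hxh => hf x (hJK hx) h hh (hJK hxh)

lemma tOmegaConvexOn_iff_forall_withStep :
    TOmegaConvexOn ω t J f ↔ ∀ h : ℝ, 0 < h → TOmegaConvexOnWithStep ω t J f h :=
  ⟨fun hf h hh x hx => hf x hx h hh, fun hf x hx h hh => hf h hh x hx⟩

lemma psum_one (j : Fin (n + 1)) : psum (fun _ : Fin n => (1 : ℝ)) j = (j : ℕ) := by
  rw [psum, Finset.sum_const, nsmul_one, Fin.card_filter_val_lt, min_eq_right (Fin.is_le j)]

lemma TOmegaConvexOnWithStep.natCast_mul {d : ℝ} (hJ : J.OrdConnected) (hω : IsPosChebyshev ω J)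
    (hd : 0 < d) (hf : TOmegaConvexOnWithStep ω (fun _ => 1) J f d) {N : ℕ} (hN : 0 < N) :
    TOmegaConvexOnWithStep ω (fun _ => 1) J f (N * d) := by
  intro x hx hx_end
  simp only [psum_one, Fin.val_last] at hx_end ⊢
  let y : ℕ → ℝ := fun m => x + m * d
  have hy : StrictMono y := fun a b hab => by
    simpa [y, hd] using hab
  have h_consec (m : ℕ) (hm : y m ∈ J) (hmn : y (m + n) ∈ J) :
      0 ≤ Phi (Fin.snoc ω f) fun i : Fin (n + 1) => y (m + i) := by
    have hy_add (k : ℕ) : y (m + k) = y m + k * d := by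
      simp only [y]
      push_cast
      ring
    simp only [hy_add] at hmn ⊢
    simpa only [psum_one] using hf (y m) hm (by simpa only [psum_one, Fin.val_last] using hmn)
  have hy_mul (j : ℕ) : x + j * (N * d) = y (j * N) := by
    simp only [y]
    push_cast
    ring
  simp only [hy_mul] at hx_end ⊢
  exact alternant_snoc_comp_nonneg_of_consecutive (J := y ⁻¹' J) (hJ.preimage_mono hy.monotone)
    (fun e he heJ => hω _ (hy.comp he) heJ) h_consec
    (e := fun i => i * N) (fun a b hab => Nat.mul_lt_mul_of_pos_right hab hN)
    (by simpa [y] using hx) (by simpa using hx_end)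

lemma tOmegaConvexOn_one_of_eventually_withStep (hJ : J.OrdConnected) (hω : IsPosChebyshev ω J)
    (hf : ∀ᶠ d in 𝓝[>] 0, TOmegaConvexOnWithStep ω (fun _ => 1) J f d) :
    TOmegaConvexOn ω (fun _ => 1) J f := by
  refine tOmegaConvexOn_iff_forall_withStep.2 fun h hh => ?_
  have h_tendsto : Tendsto (fun N : ℕ => h / N) atTop (𝓝[>] 0) :=
    tendsto_nhdsWithin_iff.2 ⟨tendsto_const_div_atTop_nhds_zero_nat h,
      (eventually_gt_atTop 0).mono fun N hN => div_pos hh (Nat.cast_pos.2 hN)⟩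
  obtain ⟨N, hN, hfN⟩ := ((eventually_gt_atTop 0).and (h_tendsto.eventually hf)).exists
  have hN_pos : (0 : ℝ) < N := Nat.cast_pos.2 hN
  simpa only [mul_div_cancel₀ h hN_pos.ne'] using hfN.natCast_mul hJ hω (div_pos hh hN_pos) hN

lemma eventually_tOmegaConvexOnWithStep (hK : IsCompact K)
    (hf : ∀ p ∈ K, ∃ U ∈ 𝓝 p, TOmegaConvexOn ω t (U ∩ K) f) :
    ∀ᶠ h in 𝓝[>] 0, TOmegaConvexOnWithStep ω t K f h := by
  -- `x ∈ K` is repeated inside: the neighbourhoods of `(0, p)` used below are not confined to `K`.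
  have h_local_uniform : ∀ᶠ h in 𝓝 (0 : ℝ), ∀ x ∈ K, x ∈ K → 0 < h →
      x + psum t (Fin.last n) * h ∈ K → 0 ≤ Phi (Fin.snoc ω f) (fun j => x + psum t j * h) := by
    refine hK.eventually_forall_of_forall_eventually fun p hp => ?_
    obtain ⟨U, hU, hfU⟩ := hf p hp
    have h_start : ∀ᶠ q : ℝ × ℝ in 𝓝 (0, p), q.2 ∈ U :=
      continuous_snd.continuousAt.eventually_mem hU
    have h_end : ∀ᶠ q : ℝ × ℝ in 𝓝 (0, p), q.2 + psum t (Fin.last n) * q.1 ∈ U :=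
      ContinuousAt.eventually_mem (by fun_prop) (by simpa using hU)
    filter_upwards [h_start, h_end] with q hq hq_end hqK hq_pos hq_endK
    exact hfU q.2 ⟨hq, hqK⟩ q.1 hq_pos ⟨hq_end, hq_endK⟩
  filter_upwards [self_mem_nhdsWithin, nhdsWithin_le_nhds h_local_uniform]
    with h hh hf_h x hx hx_end
  exact hf_h x hx hx hh hx_end

end Convexity

/-- **Corollary 9 (localizability of ω-Jensen convexity).** `f` is `ω`-Jensen convex
on `I` (i.e. `(𝟏ₙ,ω)`-convex on `I`) if and only if every point `p ∈ I` has a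
neighborhood `U` such that `f` is `ω`-Jensen convex on `U ∩ I`. -/
theorem jensenConvexOn_iff_locally
    (n : ℕ) (hn : 0 < n) (I : Set ℝ) (hI : I.OrdConnected)
    (hne : ∃ a ∈ I, ∃ b ∈ I, a < b)
    (ω : Fin n → ℝ → ℝ) (hω : IsPosChebyshev ω I) (f : ℝ → ℝ) :
    TOmegaConvexOn ω (fun _ => (1 : ℝ)) I f ↔
      ∀ p ∈ I, ∃ U ∈ nhds p, TOmegaConvexOn ω (fun _ => (1 : ℝ)) (U ∩ I) f := by
  refine ⟨fun hf p _ => ⟨Set.univ, univ_mem, hf.mono Set.inter_subset_right⟩, fun hf => ?_⟩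
  intro x hx h hh hx_end
  set K := Set.Icc x (x + psum (fun _ : Fin n => 1) (Fin.last n) * h)
  have hKI : K ⊆ I := hI.out hx hx_end
  have hf_small : ∀ᶠ d in 𝓝[>] 0, TOmegaConvexOnWithStep ω (fun _ => 1) K f d :=
    eventually_tOmegaConvexOnWithStep isCompact_Icc fun p hp =>
      (hf p (hKI hp)).imp fun U hU => hU.imp_right (.mono · (Set.inter_subset_inter_right U hKI))
  have hf_K : TOmegaConvexOn ω (fun _ => 1) K f :=
    tOmegaConvexOn_one_of_eventually_withStep Set.ordConnected_Icc (hω.mono hKI) hf_small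
  have h_le : x ≤ x + psum (fun _ : Fin n => 1) (Fin.last n) * h := by
    rw [psum_one]
    exact le_add_of_nonneg_right (by positivity)
  exact hf_K x (Set.left_mem_Icc.2 h_le) h hh (Set.right_mem_Icc.2 h_le)
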